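/- (Invariance of the Minkowski norm for the 4D system) Let E, B : ℝ³ → ℝ³ be continuous and let (x, t, v, g) : I → ℝ³ × ℝ × ℝ³ × ℝ be a C¹ solution of the real 4D system ẋ(τ) = v(τ), ṫ(τ) = g(τ), v̇(τ) = g(τ) E(x(τ)) + v(τ) × B(x(τ)), ġ(τ) = E(x(τ)) · v(τ). Then the quantity g(τ)² − |v(τ)|² is constant on I. -/

import Mathlib

/-- The cross product on `EuclideanSpace ℝ (Fin 3)`. -/
noncomputable def crossE (a b : EuclideanSpace ℝ (Fin 3)) : EuclideanSpace ℝ (Fin 3) :=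
  (WithLp.equiv 2 (Fin 3 → ℝ)).symm
    (crossProduct (WithLp.equiv 2 (Fin 3 → ℝ) a) (WithLp.equiv 2 (Fin 3 → ℝ) b))

theorem inner_crossE_self (a b : EuclideanSpace ℝ (Fin 3)) : inner ℝ a (crossE a b) = 0 := by
  rw [EuclideanSpace.inner_eq_star_dotProduct, star_trivial, dotProduct_comm]
  exact dot_self_cross _ _

theorem eq_of_hasDerivWithinAt_zero {𝕜 G : Type*} [RCLike 𝕜] [NormedAddCommGroup G]
    [NormedSpace 𝕜 G] {f : 𝕜 → G} {s : Set 𝕜} (hs : Convex ℝ s)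
    (hf : ∀ z ∈ s, HasDerivWithinAt f 0 s z) {a b : 𝕜} (ha : a ∈ s) (hb : b ∈ s) :
    f a = f b := by
  have h : ‖f a - f b‖ ≤ 0 * ‖a - b‖ :=
    hs.norm_image_sub_le_of_norm_hasDerivWithin_le hf (fun _ _ => norm_zero.le) hb ha
  rwa [zero_mul, norm_le_zero_iff, sub_eq_zero] at h

section InnerProductSpace

variable {V : Type*} [NormedAddCommGroup V] [InnerProductSpace ℝ V] {v : ℝ → V} {g : ℝ → ℝ}

theorem hasDerivWithinAt_sq_sub_norm_sq {v' : V} {g' : ℝ} {s : Set ℝ} {τ : ℝ}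
    (hg : HasDerivWithinAt g g' s τ) (hv : HasDerivWithinAt v v' s τ) :
    HasDerivWithinAt (fun σ => g σ ^ 2 - ‖v σ‖ ^ 2) (2 * (g τ * g' - inner ℝ (v τ) v')) s τ :=
  ((hg.pow 2).sub hv.norm_sq).congr_deriv (by push_cast; ring)

/-- `F` stands for the magnetic force `v × B`, which does no work; the electric term contributes
`2 * g * ⟪E, v⟫` to the derivatives of both `g ^ 2` and `‖v‖ ^ 2`, and cancels. -/
theorem minkowski_invariant_4D_general {E F : ℝ → V} {I : Set ℝ} (hI : Convex ℝ I)
    (hF : ∀ τ ∈ I, inner ℝ (v τ) (F τ) = 0)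
    (hv : ∀ τ ∈ I, HasDerivWithinAt v (g τ • E τ + F τ) I τ)
    (hg : ∀ τ ∈ I, HasDerivWithinAt g (inner ℝ (E τ) (v τ)) I τ) :
    ∀ τ₁ ∈ I, ∀ τ₂ ∈ I, g τ₁ ^ 2 - ‖v τ₁‖ ^ 2 = g τ₂ ^ 2 - ‖v τ₂‖ ^ 2 := by
  have power_balance : ∀ τ ∈ I,
      g τ * inner ℝ (E τ) (v τ) = inner ℝ (v τ) (g τ • E τ + F τ) := fun τ hτ => by
    rw [inner_add_right, hF τ hτ, add_zero, real_inner_smul_right, real_inner_comm]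
  have deriv_zero : ∀ τ ∈ I, HasDerivWithinAt (fun σ => g σ ^ 2 - ‖v σ‖ ^ 2) 0 I τ :=
    fun τ hτ => (hasDerivWithinAt_sq_sub_norm_sq (hg τ hτ) (hv τ hτ)).congr_deriv <| by
      rw [power_balance τ hτ, sub_self, mul_zero]
  exact fun τ₁ h₁ τ₂ h₂ => eq_of_hasDerivWithinAt_zero hI deriv_zero h₁ h₂

end InnerProductSpace

/-- **Invariance of the Minkowski norm for the real 4D system.**
If `(x, t, v, g)` is a `C¹` solution on an interval `I` of
`ẋ = v`, `ṫ = g`, `v̇ = g E(x) + v × B(x)`, `ġ = E(x) · v` with `E, B` continuous,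
then `g(τ)² − |v(τ)|²` is constant on `I`. -/
theorem minkowski_invariant_4D
    (E B : EuclideanSpace ℝ (Fin 3) → EuclideanSpace ℝ (Fin 3))
    (hE : Continuous E) (hB : Continuous B)
    (I : Set ℝ) (hI : Convex ℝ I)
    (x v : ℝ → EuclideanSpace ℝ (Fin 3)) (t g : ℝ → ℝ)
    (hx : ∀ τ ∈ I, HasDerivWithinAt x (v τ) I τ)
    (ht : ∀ τ ∈ I, HasDerivWithinAt t (g τ) I τ)
    (hv : ∀ τ ∈ I,
      HasDerivWithinAt v (g τ • E (x τ) + crossE (v τ) (B (x τ))) I τ)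
    (hg : ∀ τ ∈ I, HasDerivWithinAt g (inner ℝ (E (x τ)) (v τ) : ℝ) I τ) :
    ∀ τ₁ ∈ I, ∀ τ₂ ∈ I, (g τ₁) ^ 2 - ‖v τ₁‖ ^ 2 = (g τ₂) ^ 2 - ‖v τ₂‖ ^ 2 :=
  minkowski_invariant_4D_general hI (fun τ _ => inner_crossE_self (v τ) (B (x τ))) hv hg
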